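/- Let Z : ℤ³ → ℂ be a central charge whose values on the three standard basis vectors lie in ℍ, which is generic (any two nonzero vectors of ℕ³ with equal phase are ℚ-proportional, i.e. have a common positive integer multiple) and which satisfies φ(0,0,1) < φ(1,1,1) < φ(1,0,0). Then a nonzero nilpotent representation of the quiver with potential (Q, W) whose phase equals φ(1,1,1) is stable if and only if it is isomorphic to M(a₁b₂) or to M(a₂b₁); in particular, up to isomorphism there are precisely two stable representations of phase φ(1,1,1). -/

import Mathlib

/-!
# Statement 0

Work over `ℂ`.  Let `Q` be the quiver with vertices `A, B, C` and arrows `a₁, a₂ : A → B`,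
`b₁, b₂ : B → C`, `c₁, c₂ : C → A`, with potential `W = a₁b₁c₁ + a₂b₂c₂`, whose Jacobian
relations are `f_{b₁}∘f_{a₁} = 0`, `f_{c₁}∘f_{b₁} = 0`, `f_{a₁}∘f_{c₁} = 0`,
`f_{b₂}∘f_{a₂} = 0`, `f_{c₂}∘f_{b₂} = 0`, `f_{a₂}∘f_{c₂} = 0`.

Let `Z : ℤ³ → ℂ` be a central charge whose values on the three standard basis vectors lie
in `ℍ`, which is generic (any two nonzero vectors of `ℕ³` with equal phase are
`ℚ`-proportional, i.e. have a common positive integer multiple) and which satisfies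
`φ(0,0,1) < φ(1,1,1) < φ(1,0,0)`.  Then a nonzero nilpotent representation of `(Q, W)`
whose phase equals `φ(1,1,1)` is stable if and only if it is isomorphic to `M(a₁b₂)` or to
`M(a₂b₁)`; in particular, up to isomorphism there are precisely two stable representations
of phase `φ(1,1,1)`.
-/

noncomputable section
open Module

/-- The set `ℍ = {r·exp(iπφ) : r > 0, 0 < φ ≤ 1} ⊆ ℂ`. -/
def UpperH : Set ℂ :=
  {z | ∃ r φ : ℝ, 0 < r ∧ 0 < φ ∧ φ ≤ 1 ∧ z = (r : ℂ) * Complex.exp ((Real.pi * φ : ℝ) * Complex.I)}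

/-- The phase `φ ∈ (0, 1]` of a complex number `z ∈ ℍ`: if `z = r·exp(iπφ)` with `r > 0` and
`0 < φ ≤ 1`, then `Complex.arg z = π·φ`, so that `phase z = φ` is the unique `φ ∈ (0,1]`
with `z ∈ ℝ_{>0}·exp(iπφ)`. -/
def phase (z : ℂ) : ℝ := Complex.arg z / Real.pi

/-- A representation of the quiver `Q` (vertices `A, B, C`; arrows `a₁, a₂ : A → B`,
`b₁, b₂ : B → C`, `c₁, c₂ : C → A`) satisfying the Jacobian relations of the potential
`W = a₁b₁c₁ + a₂b₂c₂`. -/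
structure Rep3 where
  VA : Type
  VB : Type
  VC : Type
  [acgA : AddCommGroup VA]
  [acgB : AddCommGroup VB]
  [acgC : AddCommGroup VC]
  [modA : Module ℂ VA]
  [modB : Module ℂ VB]
  [modC : Module ℂ VC]
  [fdA : FiniteDimensional ℂ VA]
  [fdB : FiniteDimensional ℂ VB]
  [fdC : FiniteDimensional ℂ VC]
  fa1 : VA →ₗ[ℂ] VB
  fa2 : VA →ₗ[ℂ] VB
  fb1 : VB →ₗ[ℂ] VC
  fb2 : VB →ₗ[ℂ] VC
  fc1 : VC →ₗ[ℂ] VA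
  fc2 : VC →ₗ[ℂ] VA
  rel_ba1 : fb1 ∘ₗ fa1 = 0
  rel_cb1 : fc1 ∘ₗ fb1 = 0
  rel_ac1 : fa1 ∘ₗ fc1 = 0
  rel_ba2 : fb2 ∘ₗ fa2 = 0
  rel_cb2 : fc2 ∘ₗ fb2 = 0
  rel_ac2 : fa2 ∘ₗ fc2 = 0

attribute [instance] Rep3.acgA Rep3.acgB Rep3.acgC Rep3.modA Rep3.modB Rep3.modC
  Rep3.fdA Rep3.fdB Rep3.fdC

/-- The six arrows of the quiver. -/
inductive Arrow3 | a1 | a2 | b1 | b2 | c1 | c2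
deriving DecidableEq

namespace Rep3

/-- The dimension vector `(dim V_A, dim V_B, dim V_C)`. -/
def dimVec (M : Rep3) : ℕ × ℕ × ℕ := (finrank ℂ M.VA, finrank ℂ M.VB, finrank ℂ M.VC)

/-- The total space `V_A × V_B × V_C` of a representation. -/
abbrev Tot (M : Rep3) : Type := M.VA × M.VB × M.VC

/-- The endomorphism of the total space `V_A × V_B × V_C` induced by one of the six
structure maps (extended by zero on the other components). -/
def toEnd (M : Rep3) : Arrow3 → (M.Tot →ₗ[ℂ] M.Tot)
  | .a1 => LinearMap.prod 0 (LinearMap.prod (M.fa1 ∘ₗ LinearMap.fst ℂ M.VA (M.VB × M.VC)) 0)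
  | .a2 => LinearMap.prod 0 (LinearMap.prod (M.fa2 ∘ₗ LinearMap.fst ℂ M.VA (M.VB × M.VC)) 0)
  | .b1 => LinearMap.prod 0 (LinearMap.prod 0
      (M.fb1 ∘ₗ LinearMap.fst ℂ M.VB M.VC ∘ₗ LinearMap.snd ℂ M.VA (M.VB × M.VC)))
  | .b2 => LinearMap.prod 0 (LinearMap.prod 0
      (M.fb2 ∘ₗ LinearMap.fst ℂ M.VB M.VC ∘ₗ LinearMap.snd ℂ M.VA (M.VB × M.VC)))
  | .c1 => LinearMap.prod
      (M.fc1 ∘ₗ LinearMap.snd ℂ M.VB M.VC ∘ₗ LinearMap.snd ℂ M.VA (M.VB × M.VC)) 0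
  | .c2 => LinearMap.prod
      (M.fc2 ∘ₗ LinearMap.snd ℂ M.VB M.VC ∘ₗ LinearMap.snd ℂ M.VA (M.VB × M.VC)) 0

/-- A representation is nilpotent if there is `N` such that every composite of `N` of the
six structure maps is zero.  (Composites are taken inside the endomorphisms of the total
space `V_A × V_B × V_C`; non-composable composites vanish automatically there, so this is
equivalent to the vanishing of all composable composites of length `N`.) -/
def IsNilpotentRep (M : Rep3) : Prop :=
  ∃ N : ℕ, ∀ l : List Arrow3, l.length = N → (l.map M.toEnd).prod = 0

/-- A subrepresentation: a triple of submodules closed under the six structure maps. -/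
structure Sub (M : Rep3) where
  SA : Submodule ℂ M.VA
  SB : Submodule ℂ M.VB
  SC : Submodule ℂ M.VC
  mapsto_a1 : ∀ x ∈ SA, M.fa1 x ∈ SB
  mapsto_a2 : ∀ x ∈ SA, M.fa2 x ∈ SB
  mapsto_b1 : ∀ y ∈ SB, M.fb1 y ∈ SC
  mapsto_b2 : ∀ y ∈ SB, M.fb2 y ∈ SC
  mapsto_c1 : ∀ z ∈ SC, M.fc1 z ∈ SA
  mapsto_c2 : ∀ z ∈ SC, M.fc2 z ∈ SA

/-- The dimension vector of a subrepresentation. -/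
def Sub.dimVec {M : Rep3} (L : M.Sub) : ℕ × ℕ × ℕ :=
  (finrank ℂ L.SA, finrank ℂ L.SB, finrank ℂ L.SC)

/-- The subrepresentation is nonzero. -/
def Sub.Nonzero {M : Rep3} (L : M.Sub) : Prop := L.SA ≠ ⊥ ∨ L.SB ≠ ⊥ ∨ L.SC ≠ ⊥

/-- The subrepresentation is proper. -/
def Sub.Proper {M : Rep3} (L : M.Sub) : Prop := L.SA ≠ ⊤ ∨ L.SB ≠ ⊤ ∨ L.SC ≠ ⊤

end Rep3

/-- The value of the central charge on a dimension vector in `ℕ³`. -/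
def chargeOf3 (Z : ℤ × ℤ × ℤ →+ ℂ) (d : ℕ × ℕ × ℕ) : ℂ :=
  Z ((d.1 : ℤ), (d.2.1 : ℤ), (d.2.2 : ℤ))

/-- A nonzero representation `M` is stable if `φ(dim L) < φ(dim M)` for every nonzero
proper subrepresentation `L` of `M`. -/
def IsStable3 (Z : ℤ × ℤ × ℤ →+ ℂ) (M : Rep3) : Prop :=
  M.dimVec ≠ (0, 0, 0) ∧
    ∀ L : M.Sub, L.Nonzero → L.Proper →
      phase (chargeOf3 Z L.dimVec) < phase (chargeOf3 Z M.dimVec)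

/-- Isomorphism of representations. -/
def RepIso3 (M N : Rep3) : Prop :=
  ∃ (eA : M.VA ≃ₗ[ℂ] N.VA) (eB : M.VB ≃ₗ[ℂ] N.VB) (eC : M.VC ≃ₗ[ℂ] N.VC),
    (∀ x, eB (M.fa1 x) = N.fa1 (eA x)) ∧ (∀ x, eB (M.fa2 x) = N.fa2 (eA x)) ∧
    (∀ y, eC (M.fb1 y) = N.fb1 (eB y)) ∧ (∀ y, eC (M.fb2 y) = N.fb2 (eB y)) ∧
    (∀ z, eA (M.fc1 z) = N.fc1 (eC z)) ∧ (∀ z, eA (M.fc2 z) = N.fc2 (eC z))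

/-- The string module `M(a₁b₂)`: `V_A = V_B = V_C = ℂ`, `f_{a₁} = f_{b₂} = id`, all other
maps zero. -/
def Ma1b2 : Rep3 where
  VA := ℂ
  VB := ℂ
  VC := ℂ
  fa1 := LinearMap.id
  fa2 := 0
  fb1 := 0
  fb2 := LinearMap.id
  fc1 := 0
  fc2 := 0
  rel_ba1 := by simp
  rel_cb1 := by simp
  rel_ac1 := by simp
  rel_ba2 := by simp
  rel_cb2 := by simp
  rel_ac2 := by simp

/-- The string module `M(a₂b₁)`: `V_A = V_B = V_C = ℂ`, `f_{a₂} = f_{b₁} = id`, all other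
maps zero. -/
def Ma2b1 : Rep3 where
  VA := ℂ
  VB := ℂ
  VC := ℂ
  fa1 := 0
  fa2 := LinearMap.id
  fb1 := LinearMap.id
  fb2 := 0
  fc1 := 0
  fc2 := 0
  rel_ba1 := by simp
  rel_cb1 := by simp
  rel_ac1 := by simp
  rel_ba2 := by simp
  rel_cb2 := by simp
  rel_ac2 := by simp

/-!
Write `t = Z (1, 1, 1)`. For `z, w ∈ ℍ` the sign of `Im (conj z * w)` compares phases, so stability
in the phase of `t` is King stability for the weight `d ↦ Im (conj t * Z d)`, which is positive at
`A`, negative at `C` and vanishes on `(1, 1, 1)`. Genericity forces `dim M = (n, n, n)`.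

If `a₁` and `a₂` were both injective, they would be bijective, so `b₁ = b₂ = 0` and
`(V_A, V_B, 0)` would destabilise `M`. Hence some nonzero vector of `V_A` is killed by `a₁` or
`a₂`. The relations `a₁c₁ = 0 = a₂c₂` keep this property under `c₁b₂a₁` and `c₂b₁a₂`, so by
nilpotency, up to exchanging the indices `1` and `2`, there is `v ≠ 0` with
`a₂ v = 0 = c₁b₂a₁ v`. The lines spanned by `v`, `a₁ v`, `b₂a₁ v` form a subrepresentation of
weight `≥ 0`; by stability it is all of `M`, and `M ≅ M(a₁b₂)`.
-/

open scoped ComplexConjugate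

section LinearAlgebra

theorem map_natCast_triple {G : Type*} [AddCommGroup G] (f : ℤ × ℤ × ℤ →+ G) (a b c : ℕ) :
    f ((a : ℤ), (b : ℤ), (c : ℤ)) = a • f (1, 0, 0) + b • f (0, 1, 0) + c • f (0, 0, 1) := by
  simp only [← map_nsmul, ← map_add]
  simp

theorem exists_eq_diagonal_of_smul_eq_smul {d : ℕ × ℕ × ℕ} {m k : ℕ} (hm : 0 < m)
    (h : m • d = k • (1, 1, 1)) : ∃ n, d = (n, n, n) := by
  obtain ⟨a, b, c⟩ := d
  simp only [Prod.smul_mk, Prod.mk.injEq, smul_eq_mul, mul_one] at h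
  obtain ⟨ha, hb, hc⟩ := h
  exact ⟨a, by rw [Nat.eq_of_mul_eq_mul_left hm (hb.trans ha.symm),
    Nat.eq_of_mul_eq_mul_left hm (hc.trans ha.symm)]⟩

variable {K U V W : Type*} [Field K] [AddCommGroup U] [Module K U] [AddCommGroup V] [Module K V]
  [AddCommGroup W] [Module K W]

theorem map_mem_of_mem_span_singleton {f : U →ₗ[K] V} {u : U} {S : Submodule K V} (h : f u ∈ S) :
    ∀ x ∈ Submodule.span K {u}, f x ∈ S :=
  (Submodule.span_singleton_le_iff_mem u (S.comap f)).2 h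

theorem finrank_span_singleton_of_eq_zero {u : U} (hu : u = 0) :
    finrank K (Submodule.span K {u}) = 0 := by
  rw [hu, Submodule.span_zero_singleton, finrank_bot]

theorem finrank_le_of_injective_of_le_comap {f : U →ₗ[K] V} [FiniteDimensional K V]
    (hf : Function.Injective f) {S : Submodule K U} {T : Submodule K V} (h : S ≤ T.comap f) :
    finrank K S ≤ finrank K T := by
  rw [(Submodule.equivMapOfInjective f hf S).finrank_eq]
  exact Submodule.finrank_mono (Submodule.map_le_iff_le_comap.2 h)

theorem injective_of_span_singleton_eq_top {f : U →ₗ[K] V} {u : U} [FiniteDimensional K U]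
    [FiniteDimensional K V] (hdim : finrank K U = finrank K V)
    (h : Submodule.span K {f u} = ⊤) : Function.Injective f := by
  rw [LinearMap.injective_iff_surjective_of_finrank_eq_finrank hdim, ← LinearMap.range_eq_top,
    eq_top_iff, ← h, Submodule.span_singleton_le_iff_mem]
  exact LinearMap.mem_range_self f u

theorem eq_zero_of_comp_eq_zero_of_injective {f : U →ₗ[K] V} {g : V →ₗ[K] W}
    [FiniteDimensional K U] [FiniteDimensional K V] (hdim : finrank K U = finrank K V)
    (hf : Function.Injective f) (h : g ∘ₗ f = 0) : g = 0 := by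
  have hsurj := (LinearMap.injective_iff_surjective_of_finrank_eq_finrank hdim).1 hf
  rwa [← LinearMap.zero_comp f, LinearMap.cancel_right hsurj] at h

end LinearAlgebra

section Phase

variable {z w : ℂ}

theorem mem_upperH_iff_arg_pos : z ∈ UpperH ↔ 0 < z.arg := by
  constructor
  · rintro ⟨r, φ, hr, hφ, hφ1, rfl⟩
    have hpos : 0 < Real.pi * φ := mul_pos Real.pi_pos hφ
    have hle : Real.pi * φ ≤ Real.pi := mul_le_of_le_one_right Real.pi_pos.le hφ1
    rw [Complex.arg_real_mul _ hr, Complex.arg_exp_mul_I,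
      (toIocMod_eq_self Real.two_pi_pos).2 ⟨by linarith, by linarith⟩]
    exact hpos
  · intro hz
    have hz0 : z ≠ 0 := by rintro rfl; simp at hz
    refine ⟨‖z‖, z.arg / Real.pi, norm_pos_iff.2 hz0, div_pos hz Real.pi_pos,
      div_le_one_of_le₀ (Complex.arg_le_pi z) Real.pi_pos.le, ?_⟩
    rw [mul_div_cancel₀ _ Real.pi_ne_zero, Complex.norm_mul_exp_arg_mul_I]

theorem ne_zero_of_mem_upperH (hz : z ∈ UpperH) : z ≠ 0 := by
  rintro rfl
  simp [mem_upperH_iff_arg_pos] at hz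

theorem im_conj_mul (z w : ℂ) :
    (conj z * w).im = ‖z‖ * ‖w‖ * Real.sin (w.arg - z.arg) := by
  rw [Real.sin_sub, Complex.mul_im, Complex.conj_re, Complex.conj_im,
    ← Complex.norm_mul_cos_arg z, ← Complex.norm_mul_sin_arg z,
    ← Complex.norm_mul_cos_arg w, ← Complex.norm_mul_sin_arg w]
  ring

theorem im_conj_mul_comm (z w : ℂ) : (conj z * w).im = -(conj w * z).im := by
  simp only [Complex.mul_im, Complex.conj_re, Complex.conj_im]
  ring

theorem phase_lt_iff_arg_lt : phase z < phase w ↔ z.arg < w.arg :=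
  div_lt_div_iff_of_pos_right Real.pi_pos

theorem phase_lt_iff_im_conj_mul_pos (hz : z ∈ UpperH) (hw : w ∈ UpperH) :
    phase z < phase w ↔ 0 < (conj z * w).im := by
  have hnorm : 0 < ‖z‖ * ‖w‖ :=
    mul_pos (norm_pos_iff.2 (ne_zero_of_mem_upperH hz)) (norm_pos_iff.2 (ne_zero_of_mem_upperH hw))
  rw [phase_lt_iff_arg_lt, im_conj_mul, mul_pos_iff_of_pos_left hnorm]
  rw [mem_upperH_iff_arg_pos] at hz hw
  have hzπ := Complex.arg_le_pi z
  have hwπ := Complex.arg_le_pi w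
  constructor
  · exact fun h => Real.sin_pos_of_pos_of_lt_pi (by linarith) (by linarith)
  · intro h
    by_contra! hle
    exact h.not_ge (Real.sin_nonpos_of_nonpos_of_neg_pi_le (by linarith) (by linarith))

theorem phase_lt_iff_im_conj_mul_neg (hz : z ∈ UpperH) (hw : w ∈ UpperH) :
    phase z < phase w ↔ (conj w * z).im < 0 := by
  rw [phase_lt_iff_im_conj_mul_pos hz hw, im_conj_mul_comm, Left.neg_pos_iff]

theorem im_conj_mul_eq_zero_of_phase_eq (h : phase z = phase w) : (conj w * z).im = 0 := by
  have harg : z.arg = w.arg := (div_left_inj' Real.pi_ne_zero).1 h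
  rw [im_conj_mul, harg, sub_self, Real.sin_zero, mul_zero]

/-- The additive map `z ↦ (Im z, -Re z)` to the lexicographically ordered plane. It identifies
`ℍ` with the cone of positive elements of an ordered group, which makes closure of `ℍ` under sums
and multiples a matter of order. -/
def lexIm : ℂ →+ ℝ ×ₗ ℝ where
  toFun z := toLex (z.im, -z.re)
  map_zero' := by simp
  map_add' z w := by
    rw [← toLex_add, Prod.mk_add_mk, Complex.add_im, Complex.add_re, neg_add]

theorem mem_upperH_iff_lexIm_pos : z ∈ UpperH ↔ 0 < lexIm z := by
  have hpos : 0 < lexIm z ↔ 0 < z.im ∨ 0 = z.im ∧ z.re < 0 := by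
    simp [lexIm, Prod.Lex.lt_iff]
  rw [mem_upperH_iff_arg_pos, hpos, lt_iff_le_and_ne, Complex.arg_nonneg_iff, ne_comm, ne_eq,
    Complex.arg_eq_zero_iff, le_iff_lt_or_eq]
  grind

end Phase

section Weight

variable {Z : ℤ × ℤ × ℤ →+ ℂ}

theorem chargeOf3_one_one_one (Z : ℤ × ℤ × ℤ →+ ℂ) : chargeOf3 Z (1, 1, 1) = Z (1, 1, 1) := by
  simp [chargeOf3]

theorem chargeOf3_mem_upperH (hZA : Z (1, 0, 0) ∈ UpperH) (hZB : Z (0, 1, 0) ∈ UpperH)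
    (hZC : Z (0, 0, 1) ∈ UpperH) {d : ℕ × ℕ × ℕ} (hd : d ≠ (0, 0, 0)) :
    chargeOf3 Z d ∈ UpperH := by
  obtain ⟨a, b, c⟩ := d
  have hsum := map_natCast_triple (lexIm.comp Z) a b c
  simp only [AddMonoidHom.comp_apply] at hsum
  rw [mem_upperH_iff_lexIm_pos] at hZA hZB hZC ⊢
  rw [chargeOf3, hsum]
  have hA := nsmul_nonneg hZA.le a
  have hB := nsmul_nonneg hZB.le b
  have hC := nsmul_nonneg hZC.le c
  have hne : a ≠ 0 ∨ b ≠ 0 ∨ c ≠ 0 := by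
    by_contra! h
    exact hd (by rw [h.1, h.2.1, h.2.2])
  rcases hne with h | h | h
  · exact add_pos_of_pos_of_nonneg (add_pos_of_pos_of_nonneg (nsmul_pos hZA h) hB) hC
  · exact add_pos_of_pos_of_nonneg (add_pos_of_nonneg_of_pos hA (nsmul_pos hZB h)) hC
  · exact add_pos_of_nonneg_of_pos (add_nonneg hA hB) (nsmul_pos hZC h)

/-- The value of a weight `θ : ℤ³ → ℝ` on a dimension vector in `ℕ³`, the analogue of `chargeOf3`
for King stability. -/
def weightOf (θ : ℤ × ℤ × ℤ →+ ℝ) (d : ℕ × ℕ × ℕ) : ℝ :=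
  θ ((d.1 : ℤ), (d.2.1 : ℤ), (d.2.2 : ℤ))

theorem weightOf_eq (θ : ℤ × ℤ × ℤ →+ ℝ) (d : ℕ × ℕ × ℕ) :
    weightOf θ d = d.1 * θ (1, 0, 0) + d.2.1 * θ (0, 1, 0) + d.2.2 * θ (0, 0, 1) := by
  simp only [weightOf, map_natCast_triple, nsmul_eq_mul]

theorem add_add_eq_zero_of_map_one_one_one {θ : ℤ × ℤ × ℤ →+ ℝ} (hθ : θ (1, 1, 1) = 0) :
    θ (1, 0, 0) + θ (0, 1, 0) + θ (0, 0, 1) = 0 := by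
  simpa [hθ] using (map_natCast_triple θ 1 1 1).symm

/-- The weight `d ↦ Im (conj t * Z d)`; for `t ∈ ℍ` it is negative, zero or positive according to
whether `Z d ∈ ℍ` has smaller, equal or larger phase than `t`. -/
def phaseWeight (Z : ℤ × ℤ × ℤ →+ ℂ) (t : ℂ) : ℤ × ℤ × ℤ →+ ℝ :=
  Complex.imAddGroupHom.comp ((AddMonoidHom.mulLeft (conj t)).comp Z)

theorem weightOf_phaseWeight (Z : ℤ × ℤ × ℤ →+ ℂ) (t : ℂ) (d : ℕ × ℕ × ℕ) :
    weightOf (phaseWeight Z t) d = (conj t * chargeOf3 Z d).im :=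
  rfl

end Weight

namespace Rep3

section Subrepresentations

variable {M : Rep3}

theorem fb1_fa1 (x : M.VA) : M.fb1 (M.fa1 x) = 0 :=
  LinearMap.congr_fun M.rel_ba1 x

theorem fc2_fb2 (y : M.VB) : M.fc2 (M.fb2 y) = 0 :=
  LinearMap.congr_fun M.rel_cb2 y

theorem fa1_fc1 (z : M.VC) : M.fa1 (M.fc1 z) = 0 :=
  LinearMap.congr_fun M.rel_ac1 z

theorem fa2_fc2 (z : M.VC) : M.fa2 (M.fc2 z) = 0 :=
  LinearMap.congr_fun M.rel_ac2 z

theorem Sub.nonzero_iff_dimVec_ne {L : M.Sub} : L.Nonzero ↔ L.dimVec ≠ (0, 0, 0) := by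
  simp only [Sub.Nonzero, Sub.dimVec, ne_eq, Prod.mk.injEq, Submodule.finrank_eq_zero]
  tauto

theorem Sub.proper_iff_dimVec_ne {L : M.Sub} : L.Proper ↔ L.dimVec ≠ M.dimVec := by
  simp only [Sub.Proper, Sub.dimVec, Rep3.dimVec, ne_eq, Prod.mk.injEq,
    Submodule.eq_top_iff_finrank_eq]
  tauto

/-- The subrepresentation `(V_A, V_B, 0)`, which exists when no arrow leaves `V_B`. -/
def Sub.ab (hb1 : M.fb1 = 0) (hb2 : M.fb2 = 0) : M.Sub where
  SA := ⊤
  SB := ⊤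
  SC := ⊥
  mapsto_a1 _ _ := trivial
  mapsto_a2 _ _ := trivial
  mapsto_b1 _ _ := by simp [hb1]
  mapsto_b2 _ _ := by simp [hb2]
  mapsto_c1 _ _ := trivial
  mapsto_c2 _ _ := trivial

/-- The string subrepresentation with basis `v`, `a₁ v`, `b₂a₁ v`, where vectors that vanish are
dropped. -/
def Sub.string (v : M.VA) (ha : M.fa2 v = 0) (hc : M.fc1 (M.fb2 (M.fa1 v)) = 0) : M.Sub where
  SA := Submodule.span ℂ {v}
  SB := Submodule.span ℂ {M.fa1 v}
  SC := Submodule.span ℂ {M.fb2 (M.fa1 v)}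
  mapsto_a1 := map_mem_of_mem_span_singleton (Submodule.mem_span_singleton_self _)
  mapsto_a2 := map_mem_of_mem_span_singleton (by rw [ha]; exact zero_mem _)
  mapsto_b1 := map_mem_of_mem_span_singleton (by rw [fb1_fa1]; exact zero_mem _)
  mapsto_b2 := map_mem_of_mem_span_singleton (Submodule.mem_span_singleton_self _)
  mapsto_c1 := map_mem_of_mem_span_singleton (by rw [hc]; exact zero_mem _)
  mapsto_c2 := map_mem_of_mem_span_singleton (by rw [fc2_fb2]; exact zero_mem _)

theorem Sub.dimVec_ab (hb1 : M.fb1 = 0) (hb2 : M.fb2 = 0) :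
    (Sub.ab hb1 hb2).dimVec = (finrank ℂ M.VA, finrank ℂ M.VB, 0) :=
  Prod.ext (finrank_top ℂ M.VA) (Prod.ext (finrank_top ℂ M.VB) (finrank_bot ℂ M.VC))

theorem Sub.dimVec_string {v : M.VA} (hv : v ≠ 0) (ha : M.fa2 v = 0)
    (hc : M.fc1 (M.fb2 (M.fa1 v)) = 0) :
    (Sub.string v ha hc).dimVec =
      (1, finrank ℂ (Submodule.span ℂ {M.fa1 v}), finrank ℂ (Submodule.span ℂ {M.fb2 (M.fa1 v)})) :=
  Prod.ext (finrank_span_singleton (K := ℂ) hv) rfl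

end Subrepresentations

section Swap

/-- The representation with the indices `1` and `2` of the arrows exchanged; this symmetry of
`(Q, W)` interchanges `M(a₁b₂)` and `M(a₂b₁)`. -/
def swap (M : Rep3) : Rep3 where
  VA := M.VA
  VB := M.VB
  VC := M.VC
  fa1 := M.fa2
  fa2 := M.fa1
  fb1 := M.fb2
  fb2 := M.fb1
  fc1 := M.fc2
  fc2 := M.fc1
  rel_ba1 := M.rel_ba2
  rel_cb1 := M.rel_cb2
  rel_ac1 := M.rel_ac2
  rel_ba2 := M.rel_ba1
  rel_cb2 := M.rel_cb1
  rel_ac2 := M.rel_ac1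

theorem _root_.RepIso3.swap {M N : Rep3} : RepIso3 M N → RepIso3 M.swap N.swap := by
  rintro ⟨eA, eB, eC, ha1, ha2, hb1, hb2, hc1, hc2⟩
  exact ⟨eA, eB, eC, ha2, ha1, hb2, hb1, hc2, hc1⟩

/-- The subrepresentation of `M` on the same subspaces as a given subrepresentation of
`M.swap`. -/
def Sub.ofSwap {M : Rep3} (L : M.swap.Sub) : M.Sub where
  SA := L.SA
  SB := L.SB
  SC := L.SC
  mapsto_a1 := L.mapsto_a2
  mapsto_a2 := L.mapsto_a1
  mapsto_b1 := L.mapsto_b2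
  mapsto_b2 := L.mapsto_b1
  mapsto_c1 := L.mapsto_c2
  mapsto_c2 := L.mapsto_c1

end Swap

section KingStability

/-- King stability for the weight `θ`, with the sign convention that `M` has weight zero and its
nonzero proper subrepresentations have negative weight. -/
structure IsKingStable (θ : ℤ × ℤ × ℤ →+ ℝ) (M : Rep3) : Prop where
  dimVec_ne_zero : M.dimVec ≠ (0, 0, 0)
  weight_eq_zero : weightOf θ M.dimVec = 0
  weight_neg : ∀ L : M.Sub, L.Nonzero → L.Proper → weightOf θ L.dimVec < 0

theorem _root_.isStable3_iff_isKingStable {Z : ℤ × ℤ × ℤ →+ ℂ} (hZA : Z (1, 0, 0) ∈ UpperH)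
    (hZB : Z (0, 1, 0) ∈ UpperH) (hZC : Z (0, 0, 1) ∈ UpperH) {t : ℂ} (ht : t ∈ UpperH)
    {M : Rep3} (hM : phase (chargeOf3 Z M.dimVec) = phase t) :
    IsStable3 Z M ↔ M.IsKingStable (phaseWeight Z t) := by
  have hlt : ∀ L : M.Sub, L.Nonzero → (phase (chargeOf3 Z L.dimVec) <
      phase (chargeOf3 Z M.dimVec) ↔ weightOf (phaseWeight Z t) L.dimVec < 0) := fun L hL => by
    rw [hM, weightOf_phaseWeight]
    exact phase_lt_iff_im_conj_mul_neg
      (chargeOf3_mem_upperH hZA hZB hZC (Sub.nonzero_iff_dimVec_ne.1 hL)) ht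
  constructor
  · exact fun ⟨hne, h⟩ => ⟨hne, im_conj_mul_eq_zero_of_phase_eq hM,
      fun L hL hP => (hlt L hL).1 (h L hL hP)⟩
  · exact fun h => ⟨h.dimVec_ne_zero, fun L hL hP => (hlt L hL).2 (h.weight_neg L hL hP)⟩

variable {θ : ℤ × ℤ × ℤ →+ ℝ} {M : Rep3}

theorem IsKingStable.dimVec_eq_of_weight_nonneg (h : M.IsKingStable θ) {L : M.Sub}
    (hL : L.Nonzero) (hw : 0 ≤ weightOf θ L.dimVec) : L.dimVec = M.dimVec := by
  by_contra hne
  exact (h.weight_neg L hL (Sub.proper_iff_dimVec_ne.2 hne)).not_ge hw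

theorem IsKingStable.swap (h : M.IsKingStable θ) : M.swap.IsKingStable θ :=
  ⟨h.dimVec_ne_zero, h.weight_eq_zero, fun L => h.weight_neg L.ofSwap⟩

end KingStability

section StringModules

variable {θ : ℤ × ℤ × ℤ →+ ℝ} {M : Rep3}

theorem not_repIso3_Ma1b2_Ma2b1 : ¬ RepIso3 Ma1b2 Ma2b1 := by
  rintro ⟨eA, eB, eC, ha1, -⟩
  have h : eB (1 : ℂ) = (0 : ℂ) := ha1 (1 : ℂ)
  have h10 : (1 : ℂ) = 0 := eB.map_eq_zero_iff.1 h
  exact one_ne_zero h10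

theorem repIso3_Ma1b2_iff : RepIso3 M Ma1b2 ↔
    M.dimVec = (1, 1, 1) ∧ Function.Injective M.fa1 ∧ Function.Injective M.fb2 := by
  constructor
  · rintro ⟨eA, eB, eC, ha1, -, -, hb2, -⟩
    have ha : eB ∘ M.fa1 = eA := funext ha1
    have hb : eC ∘ M.fb2 = eB := funext hb2
    exact ⟨Prod.ext (eA.finrank_eq.trans (finrank_self ℂ))
      (Prod.ext (eB.finrank_eq.trans (finrank_self ℂ)) (eC.finrank_eq.trans (finrank_self ℂ))),
      (ha ▸ eA.injective).of_comp, (hb ▸ eB.injective).of_comp⟩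
  · rintro ⟨hdim, ha, hb⟩
    simp only [dimVec, Prod.mk.injEq] at hdim
    obtain ⟨hA, hB, hC⟩ := hdim
    have hAB := hA.trans hB.symm
    have hBC := hB.trans hC.symm
    let eC : M.VC ≃ₗ[ℂ] ℂ := LinearEquiv.ofFinrankEq _ _ (hC.trans (finrank_self ℂ).symm)
    let eB : M.VB ≃ₗ[ℂ] ℂ := (M.fb2.linearEquivOfInjective hb hBC).trans eC
    let eA : M.VA ≃ₗ[ℂ] ℂ := (M.fa1.linearEquivOfInjective ha hAB).trans eB
    have ha2 : M.fa2 = 0 :=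
      (LinearMap.cancel_left hb).1 (M.rel_ba2.trans (LinearMap.comp_zero _).symm)
    have hb1 : M.fb1 = 0 := eq_zero_of_comp_eq_zero_of_injective hAB ha M.rel_ba1
    have hc1 : M.fc1 = 0 :=
      (LinearMap.cancel_left ha).1 (M.rel_ac1.trans (LinearMap.comp_zero _).symm)
    have hc2 : M.fc2 = 0 := eq_zero_of_comp_eq_zero_of_injective hBC hb M.rel_cb2
    refine ⟨eA, eB, eC, fun _ => rfl, fun x => ?_, fun y => ?_, fun _ => rfl, fun z => ?_,
      fun z => ?_⟩
    · rw [ha2]; exact map_zero eB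
    · rw [hb1]; exact map_zero eC
    · rw [hc1]; exact map_zero eA
    · rw [hc2]; exact map_zero eA

theorem isKingStable_of_injective (hA : 0 < θ (1, 0, 0)) (hC : θ (0, 0, 1) < 0)
    (hθ : θ (1, 1, 1) = 0) (hdim : M.dimVec = (1, 1, 1)) (ha : Function.Injective M.fa1)
    (hb : Function.Injective M.fb2) : M.IsKingStable θ := by
  refine ⟨by simp [hdim], by simpa [hdim, weightOf] using hθ, fun L hL hP => ?_⟩
  have hAB : finrank ℂ L.SA ≤ finrank ℂ L.SB :=
    finrank_le_of_injective_of_le_comap ha L.mapsto_a1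
  have hBC : finrank ℂ L.SB ≤ finrank ℂ L.SC :=
    finrank_le_of_injective_of_le_comap hb L.mapsto_b2
  have hC_le : finrank ℂ L.SC ≤ 1 :=
    (Submodule.finrank_le L.SC).trans_eq (congrArg (fun d => d.2.2) hdim)
  have hsum := add_add_eq_zero_of_map_one_one_one hθ
  rw [Sub.nonzero_iff_dimVec_ne] at hL
  rw [Sub.proper_iff_dimVec_ne, hdim] at hP
  rw [weightOf_eq]
  simp only [Sub.dimVec, ne_eq, Prod.mk.injEq] at hL hP ⊢
  have hA0 : finrank ℂ L.SA = 0 := by omega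
  have hC1 : finrank ℂ L.SC = 1 := by omega
  have hB01 : finrank ℂ L.SB = 0 ∨ finrank ℂ L.SB = 1 := by omega
  rcases hB01 with hB | hB <;>
    simp only [hA0, hB, hC1, Nat.cast_one, Nat.cast_zero, one_mul, zero_mul] <;> linarith

theorem isKingStable_of_repIso3_Ma1b2 (hA : 0 < θ (1, 0, 0)) (hC : θ (0, 0, 1) < 0)
    (hθ : θ (1, 1, 1) = 0) (h : RepIso3 M Ma1b2) : M.IsKingStable θ := by
  obtain ⟨hdim, ha, hb⟩ := repIso3_Ma1b2_iff.1 h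
  exact isKingStable_of_injective hA hC hθ hdim ha hb

end StringModules

section Nilpotency

variable {M : Rep3}

theorem IsNilpotentRep.exists_prod_eq_zero (hM : M.IsNilpotentRep) :
    ∃ N, ∀ l : List Arrow3, N ≤ l.length → (l.map M.toEnd).prod = 0 := by
  obtain ⟨N, hN⟩ := hM
  refine ⟨N, fun l hl => ?_⟩
  rw [← List.take_append_drop N l, List.map_append, List.prod_append,
    hN _ (List.length_take_of_le hl), zero_mul]

theorem IsNilpotentRep.exists_mem_forall_prod_notMem (hM : M.IsNilpotentRep) {S : Set M.Tot}
    (hS : S.Nonempty) (h0 : 0 ∉ S) :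
    ∃ x ∈ S, ∀ l : List Arrow3, l ≠ [] → (l.map M.toEnd).prod x ∉ S := by
  by_contra! hreturn
  obtain ⟨x, hx⟩ := hS
  have hlong : ∀ k, ∃ l : List Arrow3, k ≤ l.length ∧ (l.map M.toEnd).prod x ∈ S := by
    intro k
    induction k with
    | zero => exact ⟨[], le_rfl, hx⟩
    | succ k ih =>
      obtain ⟨l, hl, hlS⟩ := ih
      obtain ⟨l', hl', hlS'⟩ := hreturn _ hlS
      refine ⟨l' ++ l, ?_, by simpa using hlS'⟩
      have := List.length_pos_iff.2 hl'
      rw [List.length_append]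
      omega
  obtain ⟨N, hN⟩ := hM.exists_prod_eq_zero
  obtain ⟨l, hl, hlS⟩ := hlong N
  rw [hN l hl] at hlS
  exact h0 hlS

theorem IsNilpotentRep.exists_string_top (hM : M.IsNilpotentRep)
    (hker : ∃ x ≠ 0, M.fa1 x = 0 ∨ M.fa2 x = 0) :
    ∃ v ≠ 0, (M.fa2 v = 0 ∧ M.fc1 (M.fb2 (M.fa1 v)) = 0) ∨
      (M.fa1 v = 0 ∧ M.fc2 (M.fb1 (M.fa2 v)) = 0) := by
  let S : Set M.Tot := {p | ∃ x ≠ 0, (M.fa1 x = 0 ∨ M.fa2 x = 0) ∧ p = (x, 0, 0)}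
  have hS : S.Nonempty := by
    obtain ⟨x, hx, hxa⟩ := hker
    exact ⟨_, x, hx, hxa, rfl⟩
  have h0 : 0 ∉ S := by
    rintro ⟨x, hx, -, h⟩
    exact hx (congrArg Prod.fst h).symm
  obtain ⟨_, ⟨v, hv, hva, rfl⟩, hreturn⟩ := hM.exists_mem_forall_prod_notMem hS h0
  refine ⟨v, hv, ?_⟩
  rcases hva with ha1 | ha2
  · right
    refine ⟨ha1, by_contra fun hne => hreturn [.c2, .b1, .a2] (by simp) ?_⟩
    exact ⟨_, hne, Or.inr (fa2_fc2 _), rfl⟩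
  · left
    refine ⟨ha2, by_contra fun hne => hreturn [.c1, .b2, .a1] (by simp) ?_⟩
    exact ⟨_, hne, Or.inl (fa1_fc1 _), rfl⟩

end Nilpotency

section Classification

variable {θ : ℤ × ℤ × ℤ →+ ℝ} {M : Rep3} {n : ℕ}

theorem IsKingStable.exists_ne_zero_fa1_or_fa2_eq_zero (h : M.IsKingStable θ)
    (hC : θ (0, 0, 1) ≤ 0) (hθ : θ (1, 1, 1) = 0) (hdim : M.dimVec = (n, n, n)) :
    ∃ x ≠ 0, M.fa1 x = 0 ∨ M.fa2 x = 0 := by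
  by_contra! hker
  have hn : n ≠ 0 := by
    rintro rfl
    exact h.dimVec_ne_zero hdim
  have hdim' := hdim
  simp only [dimVec, Prod.mk.injEq] at hdim'
  obtain ⟨hnA, hnB, -⟩ := hdim'
  have ha1 : Function.Injective M.fa1 :=
    (injective_iff_map_eq_zero _).2 fun x hx => by_contra fun hne => (hker x hne).1 hx
  have ha2 : Function.Injective M.fa2 :=
    (injective_iff_map_eq_zero _).2 fun x hx => by_contra fun hne => (hker x hne).2 hx
  have hAB : finrank ℂ M.VA = finrank ℂ M.VB := hnA.trans hnB.symm
  let L : M.Sub := Sub.ab (eq_zero_of_comp_eq_zero_of_injective hAB ha1 M.rel_ba1)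
    (eq_zero_of_comp_eq_zero_of_injective hAB ha2 M.rel_ba2)
  have hL : L.dimVec = (n, n, 0) := by rw [Sub.dimVec_ab, hnA, hnB]
  have hw : 0 ≤ weightOf θ L.dimVec := by
    have hsum := add_add_eq_zero_of_map_one_one_one hθ
    have hAB_nonneg : 0 ≤ (n : ℝ) * (θ (1, 0, 0) + θ (0, 1, 0)) :=
      mul_nonneg n.cast_nonneg (by linarith)
    rw [weightOf_eq, hL]
    simpa [mul_add] using hAB_nonneg
  have hLM := h.dimVec_eq_of_weight_nonneg (Sub.nonzero_iff_dimVec_ne.2 (by simp [hL, hn])) hw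
  rw [hL, hdim, Prod.mk.injEq, Prod.mk.injEq] at hLM
  exact hn hLM.2.2.symm

theorem Sub.weight_string_nonneg (hA : 0 ≤ θ (1, 0, 0)) (hC : θ (0, 0, 1) ≤ 0)
    (hθ : θ (1, 1, 1) = 0) {v : M.VA} (hv : v ≠ 0) (ha : M.fa2 v = 0)
    (hc : M.fc1 (M.fb2 (M.fa1 v)) = 0) : 0 ≤ weightOf θ (Sub.string v ha hc).dimVec := by
  have hsum := add_add_eq_zero_of_map_one_one_one hθ
  rw [weightOf_eq, Sub.dimVec_string hv]
  by_cases hv1 : M.fa1 v = 0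
  · have hv2 : M.fb2 (M.fa1 v) = 0 := by rw [hv1, map_zero]
    simpa [finrank_span_singleton_of_eq_zero hv1, finrank_span_singleton_of_eq_zero hv2] using hA
  by_cases hv2 : M.fb2 (M.fa1 v) = 0
  · simp only [finrank_span_singleton hv1, finrank_span_singleton_of_eq_zero hv2, Nat.cast_one,
      Nat.cast_zero, one_mul, zero_mul]
    linarith
  · simp only [finrank_span_singleton hv1, finrank_span_singleton hv2, Nat.cast_one, one_mul]
    linarith

theorem IsKingStable.repIso3_Ma1b2 (h : M.IsKingStable θ) (hA : 0 ≤ θ (1, 0, 0))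
    (hC : θ (0, 0, 1) ≤ 0) (hθ : θ (1, 1, 1) = 0) (hdim : M.dimVec = (n, n, n)) {v : M.VA}
    (hv : v ≠ 0) (ha : M.fa2 v = 0) (hc : M.fc1 (M.fb2 (M.fa1 v)) = 0) :
    RepIso3 M Ma1b2 := by
  have hL : (Sub.string v ha hc).dimVec = M.dimVec :=
    h.dimVec_eq_of_weight_nonneg (Or.inl (by simpa [Sub.string] using hv))
      (Sub.weight_string_nonneg hA hC hθ hv ha hc)
  simp only [Sub.dimVec_string hv, dimVec, Prod.mk.injEq] at hL hdim
  obtain ⟨hLA, hLB, hLC⟩ := hL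
  obtain ⟨hnA, hnB, hnC⟩ := hdim
  have hn : n = 1 := hnA.symm.trans hLA.symm
  refine repIso3_Ma1b2_iff.2 ⟨by simp only [dimVec, hnA, hnB, hnC, hn], ?_, ?_⟩
  · exact injective_of_span_singleton_eq_top (hnA.trans hnB.symm)
      (Submodule.eq_top_of_finrank_eq hLB)
  · exact injective_of_span_singleton_eq_top (hnB.trans hnC.symm)
      (Submodule.eq_top_of_finrank_eq hLC)

theorem isKingStable_iff_repIso3 (hM : M.IsNilpotentRep) (hdim : M.dimVec = (n, n, n))
    (hA : 0 < θ (1, 0, 0)) (hC : θ (0, 0, 1) < 0) (hθ : θ (1, 1, 1) = 0) :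
    M.IsKingStable θ ↔ RepIso3 M Ma1b2 ∨ RepIso3 M Ma2b1 := by
  constructor
  · intro h
    obtain ⟨v, hv, ⟨ha, hc⟩ | ⟨ha, hc⟩⟩ :=
      hM.exists_string_top (h.exists_ne_zero_fa1_or_fa2_eq_zero hC.le hθ hdim)
    · exact Or.inl (h.repIso3_Ma1b2 hA.le hC.le hθ hdim hv ha hc)
    · exact Or.inr (h.swap.repIso3_Ma1b2 hA.le hC.le hθ hdim hv ha hc).swap
  · rintro (e | e)
    · exact isKingStable_of_repIso3_Ma1b2 hA hC hθ e
    · exact (isKingStable_of_repIso3_Ma1b2 hA hC hθ e.swap).swap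

end Classification

end Rep3

/-- Let `Z : ℤ³ → ℂ` be a central charge whose values on the three
standard basis vectors lie in `ℍ`, which is generic, and which satisfies
`φ(0,0,1) < φ(1,1,1) < φ(1,0,0)`.  Then a nonzero nilpotent representation of `(Q, W)`
whose phase equals `φ(1,1,1)` is stable if and only if it is isomorphic to `M(a₁b₂)` or to
`M(a₂b₁)`; and `M(a₁b₂) ≇ M(a₂b₁)`, so that up to isomorphism there are precisely two
stable representations of phase `φ(1,1,1)`. -/
theorem two_stables_of_phase_theta
    (Z : ℤ × ℤ × ℤ →+ ℂ)
    (hZA : Z (1, 0, 0) ∈ UpperH) (hZB : Z (0, 1, 0) ∈ UpperH) (hZC : Z (0, 0, 1) ∈ UpperH)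
    (hgen : ∀ d d' : ℕ × ℕ × ℕ, d ≠ (0, 0, 0) → d' ≠ (0, 0, 0) →
      phase (chargeOf3 Z d) = phase (chargeOf3 Z d') →
      ∃ m n : ℕ, 0 < m ∧ 0 < n ∧ m • d = n • d')
    (h1 : phase (Z (0, 0, 1)) < phase (Z (1, 1, 1)))
    (h2 : phase (Z (1, 1, 1)) < phase (Z (1, 0, 0))) :
    (∀ M : Rep3, Rep3.IsNilpotentRep M → M.dimVec ≠ (0, 0, 0) →
      phase (chargeOf3 Z M.dimVec) = phase (Z (1, 1, 1)) →
      (IsStable3 Z M ↔ (RepIso3 M Ma1b2 ∨ RepIso3 M Ma2b1))) ∧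
    ¬ RepIso3 Ma1b2 Ma2b1 := by
  have hZ : Z (1, 1, 1) ∈ UpperH :=
    chargeOf3_one_one_one Z ▸ chargeOf3_mem_upperH hZA hZB hZC (by simp)
  refine ⟨fun M hnil hne hphase => ?_, Rep3.not_repIso3_Ma1b2_Ma2b1⟩
  obtain ⟨m, k, hm, -, hmk⟩ := hgen M.dimVec (1, 1, 1) hne (by simp)
    (by rw [hphase, chargeOf3_one_one_one])
  obtain ⟨n, hdim⟩ := exists_eq_diagonal_of_smul_eq_smul hm hmk
  rw [isStable3_iff_isKingStable hZA hZB hZC hZ hphase]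
  exact Rep3.isKingStable_iff_repIso3 hnil hdim
    ((phase_lt_iff_im_conj_mul_pos hZ hZA).1 h2)
    ((phase_lt_iff_im_conj_mul_neg hZC hZ).1 h1)
    (im_conj_mul_eq_zero_of_phase_eq rfl)
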